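/- arXiv:2108.05314 — 3 statements merged into one kernel-verified Lean document; each statement's English description precedes it below -/
import Mathlib

section
/- Let κ be a regular uncountable cardinal and B a Boolean algebra satisfying the κ-chain condition. Then for every family ⟨b_α : α < κ⟩ of elements of B \ {⊥} and every positive integer ℓ there exist distinct ordinals α_0, …, α_{ℓ−1} < κ such that b_{α_0} ⊓ b_{α_1} ⊓ ⋯ ⊓ b_{α_{ℓ−1}} ≠ ⊥. -/
/-!
Call a set of indices centered if the members of the family at finitely many of its indices always
have nonzero meet. Every index lies in a maximal centered set. If all centered sets were finite,
the meets over the maximal ones would be nonzero, and pairwise disjoint by maximality, so by the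
chain condition there would be fewer than `κ` maximal centered sets. But fewer than `κ` finite sets
cannot cover an index set of size at least `κ`, as `κ` is infinite.
-/

open Cardinal

universe u

theorem cardinalMk_le_of_finset_cover {α β : Type u} [Infinite α] (s : β → Finset α)
    (hs : ∀ a, ∃ b, a ∈ s b) : #α ≤ #β := by
  choose f hf using hs
  by_contra! hlt
  obtain ⟨b, hb⟩ := exists_infinite_fiber f hlt
  have fiber_subset : f ⁻¹' {b} ⊆ s b := by
    rintro a rfl
    exact hf a
  exact Set.infinite_coe_iff.mp hb ((s b).finite_toSet.subset fiber_subset)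

section ChainCondition

variable {B : Type u} [SemilatticeInf B] [OrderBot B] {κ : Cardinal.{u}}

/-- The `κ`-chain condition, for a meet-semilattice with bottom: every antichain, in the
forcing-theoretic sense of a set of nonzero pairwise disjoint elements, has fewer than `κ`
elements. -/
def ChainCondition (B : Type u) [SemilatticeInf B] [OrderBot B] (κ : Cardinal.{u}) : Prop :=
  ∀ A : Set B, (∀ a ∈ A, a ≠ ⊥) → A.Pairwise Disjoint → #A < κ

theorem ChainCondition.mk_lt_of_pairwise_disjoint (hB : ChainCondition B κ) {α : Type u}
    {f : α → B} (hf : ∀ a, f a ≠ ⊥) (hd : Pairwise fun a a' => Disjoint (f a) (f a')) :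
    #α < κ := by
  have f_injective : Function.Injective f :=
    Function.injective_iff_pairwise_ne.mpr (hd.mono fun a _ h => h.ne (hf a))
  rw [← mk_range_eq f f_injective]
  exact hB (Set.range f) (Set.forall_mem_range.mpr hf) hd.range_pairwise

end ChainCondition

section Centered

variable {B ι : Type*} [SemilatticeInf B] [OrderBot B] [OrderTop B] {b : ι → B}

/-- A set `T` of indices is centered for the family `b` if the subfamily of `b` indexed by `T` has
the finite intersection property. The empty meet is included, so that even `∅` is centered only if
`⊤ ≠ ⊥`. -/
def IsCentered (b : ι → B) (T : Set ι) : Prop :=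
  ∀ s : Finset ι, (s : Set ι) ⊆ T → s.inf b ≠ ⊥

theorem isCentered_coe_iff {s : Finset ι} : IsCentered b s ↔ s.inf b ≠ ⊥ :=
  ⟨fun h => h s subset_rfl, fun h _ ht =>
    ne_bot_of_le_ne_bot h (Finset.inf_mono (Finset.coe_subset.mp ht))⟩

theorem isCentered_singleton {i : ι} (hi : b i ≠ ⊥) : IsCentered b {i} := by
  rw [← Finset.coe_singleton, isCentered_coe_iff, Finset.inf_singleton]
  exact hi

theorem isOfFiniteCharacter_isCentered (b : ι → B) :
    Order.IsOfFiniteCharacter {T | IsCentered b T} :=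
  fun _ => ⟨fun hT _ hUT _ s hs => hT s (hs.trans hUT),
    fun h s hs => h s hs s.finite_toSet s subset_rfl⟩

theorem exists_mem_maximal_isCentered {i : ι} (hi : b i ≠ ⊥) :
    ∃ T, i ∈ T ∧ Maximal (IsCentered b) T := by
  obtain ⟨T, hiT, hT⟩ :=
    (isOfFiniteCharacter_isCentered b).exists_maximal (isCentered_singleton hi)
  exact ⟨T, hiT rfl, hT⟩

theorem disjoint_inf_of_maximal_isCentered {s t : Finset ι}
    (hs : Maximal (IsCentered b) (s : Set ι)) (ht : Maximal (IsCentered b) (t : Set ι))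
    (hst : s ≠ t) : Disjoint (s.inf b) (t.inf b) := by
  classical
  contrapose! hst
  have union_centered : IsCentered b (s ∪ t : Finset ι) := by
    rwa [isCentered_coe_iff, Finset.inf_union, ne_eq, ← disjoint_iff]
  have s_eq := hs.eq_of_subset union_centered (Finset.coe_subset.mpr Finset.subset_union_left)
  have t_eq := ht.eq_of_subset union_centered (Finset.coe_subset.mpr Finset.subset_union_right)
  exact Finset.coe_injective (s_eq.trans t_eq.symm)

theorem IsCentered.exists_finset_card_eq {T : Set ι} (hT : IsCentered b T) (hinf : T.Infinite)
    (n : ℕ) : ∃ s : Finset ι, s.card = n ∧ s.inf b ≠ ⊥ := by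
  obtain ⟨s, hsT, hs⟩ := hinf.exists_subset_card_eq n
  exact ⟨s, hs, hT s hsT⟩

end Centered

theorem ChainCondition.mk_maximal_isCentered_lt {B ι : Type u} [SemilatticeInf B] [OrderBot B]
    [OrderTop B] {κ : Cardinal.{u}} (hB : ChainCondition B κ) (b : ι → B) :
    #{s : Finset ι // Maximal (IsCentered b) (s : Set ι)} < κ :=
  hB.mk_lt_of_pairwise_disjoint (f := fun s => s.1.inf b)
    (fun s => isCentered_coe_iff.mp s.2.prop)
    fun s t hst => disjoint_inf_of_maximal_isCentered s.2 t.2 (Subtype.coe_ne_coe.mpr hst)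

theorem stmt2_general {B ι : Type u} [SemilatticeInf B] [OrderBot B] [OrderTop B]
    {κ : Cardinal.{u}} (hκ : ℵ₀ ≤ κ) (hB : ChainCondition B κ) (hι : κ ≤ #ι) (b : ι → B)
    (hb : ∀ i, b i ≠ ⊥) :
    ∃ T : Set ι, T.Infinite ∧ IsCentered b T := by
  have : Infinite ι := infinite_iff.mpr (hκ.trans hι)
  by_contra! h
  have centered_finite (T : Set ι) (hT : IsCentered b T) : T.Finite :=
    by_contra fun hinf => h T hinf hT
  have maximal_cover (i : ι) :
      ∃ s : {s : Finset ι // Maximal (IsCentered b) (s : Set ι)}, i ∈ s.1 := by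
    obtain ⟨T, hiT, hT⟩ := exists_mem_maximal_isCentered (hb i)
    lift T to Finset ι using centered_finite T hT.prop
    exact ⟨⟨T, hT⟩, hiT⟩
  have le_mk_maximal := hι.trans (cardinalMk_le_of_finset_cover _ maximal_cover)
  exact le_mk_maximal.not_gt (hB.mk_maximal_isCentered_lt b)

/-- **Inductive core of Theorem 7.2.** In a Boolean algebra with the `κ`-c.c. (`κ` regular
uncountable), any `κ`-indexed family of nonzero elements contains, for every positive `ℓ`,
`ℓ` distinct members with nonzero common meet. -/
theorem stmt2 {B : Type u} [BooleanAlgebra B] (κ : Cardinal.{u})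
    (hreg : κ.IsRegular) (hunc : Cardinal.aleph0 < κ)
    (hcc : ∀ A : Set B, (∀ a ∈ A, a ≠ ⊥) → A.Pairwise (fun x y => x ⊓ y = ⊥) →
      Cardinal.mk A < κ)
    {ι : Type u} (hι : Cardinal.mk ι = κ)
    (b : ι → B) (hb : ∀ i, b i ≠ ⊥) (ℓ : ℕ) (hℓ : 0 < ℓ) :
    ∃ s : Finset ι, s.card = ℓ ∧ s.inf b ≠ ⊥ := by
  obtain ⟨T, hinf, hT⟩ := stmt2_general hunc.le
    (fun A hA hd => hcc A hA (hd.imp fun _ _ => Disjoint.eq_bot)) hι.ge b hb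
  exact hT.exists_finset_card_eq hinf ℓ
end

section
/- Let κ be a regular uncountable cardinal, X a set, and for each ε < κ let v⁰_ε and v¹_ε be finite subsets of X with v⁰_ε ∩ v¹_ε = ∅. Then there exists U ⊆ κ with |U| = κ such that for all ε, ε′ ∈ U, (v⁰_ε ∪ v⁰_{ε′}) ∩ (v¹_ε ∪ v¹_{ε′}) = ∅. -/
/-!
Pass to `κ` many indices at which the sets `v0 ε ∪ v1 ε` form a Δ-system, with root `R`, and then
to `κ` many of these at which `v0 ε ∩ R` does not depend on `ε`. A point of `v0 ε ∩ v1 ε'` with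
`ε ≠ ε'` lies in `R`, hence in `v0 ε ∩ R = v0 ε' ∩ R`, and so in `v0 ε' ∩ v1 ε' = ∅`.

A Δ-system is found among sets with at most `n` elements by induction on `n`: either some point
lies in `κ` many of the sets and can be removed from them, or every set meets fewer than `κ`
others and a maximal pairwise disjoint subfamily has size `κ`.
-/

section DeltaSystem

open Cardinal

universe u v

variable {ι : Type u} {X : Type v} {κ : Cardinal.{u}} {S : Set ι}

theorem exists_le_mk_of_subset_iUnion (hκ : ℵ₀ ≤ κ) {A : X → Set ι}
    (hX : lift.{u} #X < lift.{v} κ.ord.cof) (hS : κ ≤ #S) (hSA : S ⊆ ⋃ x, A x) :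
    ∃ x, κ ≤ #(A x) := by
  by_contra! hA
  have hrange : #(Set.range A) < κ.ord.cof := lift_lt.1 (mk_range_le_lift.trans_lt hX)
  have hsup : ⨆ s : Set.range A, #s < κ :=
    iSup_lt_of_lt_cof_ord hrange (Set.forall_subtype_range_iff.2 hA)
  have hunion : #(⋃ x, A x) < κ :=
    (mk_sUnion_le (Set.range A)).trans_lt <|
      mul_lt_of_lt hκ (hrange.trans_le (Ordinal.cof_ord_le κ)) hsup
  exact (hS.trans (mk_le_mk_of_subset hSA)).not_gt hunion

theorem exists_le_mk_of_subset_iUnion_of_finite [Finite X] (hκ : ℵ₀ ≤ κ) {A : X → Set ι}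
    (hS : κ ≤ #S) (hSA : S ⊆ ⋃ x, A x) : ∃ x, κ ≤ #(A x) := by
  have hcof : ℵ₀ ≤ κ.ord.cof :=
    Ordinal.aleph0_le_cof_iff.2 (Ordinal.one_lt_cof_iff.2 (isSuccLimit_ord hκ))
  exact exists_le_mk_of_subset_iUnion hκ
    ((lift_lt_aleph0.2 (lt_aleph0_of_finite X)).trans_le (aleph0_le_lift.2 hcof)) hS hSA

theorem exists_subset_pairwise_of_mk_not_lt (hκ : κ.IsRegular) {r : ι → ι → Prop} [Std.Symm r]
    (hS : κ ≤ #S) (hr : ∀ i ∈ S, #{j ∈ S | ¬r i j} < κ) :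
    ∃ U ⊆ S, κ ≤ #U ∧ U.Pairwise r := by
  obtain ⟨U, hU⟩ : ∃ U, Maximal (fun U : Set ι ↦ U ⊆ S ∧ U.Pairwise r) U :=
    zorn_subset {U | U ⊆ S ∧ U.Pairwise r} fun c hc hchain ↦
      ⟨⋃₀ c, ⟨Set.sUnion_subset fun s hs ↦ (hc hs).1,
        (Set.pairwise_sUnion hchain.directedOn).2 fun s hs ↦ (hc hs).2⟩,
        fun _ ↦ Set.subset_sUnion_of_mem⟩
  refine ⟨U, hU.prop.1, ?_, hU.prop.2⟩
  have hcover : S ⊆ U ∪ ⋃ i ∈ U, {j ∈ S | ¬r i j} := by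
    intro j hj
    by_contra! hnot
    simp only [Set.mem_union, Set.mem_iUnion, Set.mem_ofPred_eq, not_or, not_exists, not_and,
      not_not] at hnot
    have hinsert : (insert j U).Pairwise r :=
      hU.prop.2.insert_of_symm fun i hi _ ↦ symm (hnot.2 i hi hj)
    exact hnot.1 (hU.mem_of_prop_insert ⟨Set.insert_subset hj hU.prop.1, hinsert⟩)
  by_contra! hlt
  have hunion : #(⋃ i ∈ U, {j ∈ S | ¬r i j}) < κ :=
    (card_biUnion_lt_iff_forall_of_isRegular hκ hlt).2 fun i hi ↦ hr i (hU.prop.1 hi)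
  exact hS.not_gt <| (mk_le_mk_of_subset hcover).trans_lt <|
    (mk_union_le _ _).trans_lt (add_lt_of_lt hκ.aleph0_le hlt hunion)

theorem exists_subset_pairwiseDisjoint_of_mk_mem_lt (hκ : κ.IsRegular) {a : ι → Finset X}
    (hS : κ ≤ #S) (ha : ∀ x, #{i ∈ S | x ∈ a i} < κ) :
    ∃ U ⊆ S, κ ≤ #U ∧ U.PairwiseDisjoint a := by
  have : Std.Symm (Function.onFun Disjoint a) := ⟨fun _ _ h ↦ Disjoint.symm h⟩
  refine exists_subset_pairwise_of_mk_not_lt hκ hS fun i _ ↦ ?_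
  by_contra! hle
  have hmeet : {j ∈ S | ¬Disjoint (a i) (a j)} ⊆ ⋃ x : a i, {j ∈ S | ↑x ∈ a j} := by
    rintro j ⟨hj, hij⟩
    obtain ⟨x, hxi, hxj⟩ := Finset.not_disjoint_iff.1 hij
    exact Set.mem_iUnion.2 ⟨⟨x, hxi⟩, hj, hxj⟩
  obtain ⟨x, hx⟩ := exists_le_mk_of_subset_iUnion_of_finite hκ.aleph0_le hle hmeet
  exact hx.not_gt (ha x)

variable [DecidableEq X]

/-- The sets `a i` with `i ∈ U` form a Δ-system (sunflower) with root `R`. The family is indexed,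
so equal sets at distinct indices are allowed; they are then equal to `R`. -/
def IsDeltaSystem (a : ι → Finset X) (U : Set ι) (R : Finset X) : Prop :=
  U.Pairwise fun i j ↦ a i ∩ a j = R

theorem IsDeltaSystem.mono {a : ι → Finset X} {U V : Set ι} {R : Finset X}
    (h : IsDeltaSystem a V R) (hUV : U ⊆ V) : IsDeltaSystem a U R :=
  Set.Pairwise.mono hUV h

theorem IsDeltaSystem.insert_of_erase {a : ι → Finset X} {U : Set ι} {R : Finset X} {x : X}
    (h : IsDeltaSystem (fun i ↦ (a i).erase x) U R) (hx : ∀ i ∈ U, x ∈ a i) :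
    IsDeltaSystem a U (insert x R) := by
  intro i hi j hj hij
  calc a i ∩ a j = insert x ((a i).erase x) ∩ insert x ((a j).erase x) := by
        rw [Finset.insert_erase (hx i hi), Finset.insert_erase (hx j hj)]
    _ = insert x ((a i).erase x ∩ (a j).erase x) := (Finset.insert_inter_distrib _ _ _).symm
    _ = insert x R := congrArg (insert x) (h hi hj hij)

theorem IsDeltaSystem.disjoint_of_inter_eq {v w : ι → Finset X} {U : Set ι} {R T : Finset X}
    (h : IsDeltaSystem (fun i ↦ v i ∪ w i) U R) (hT : ∀ i ∈ U, v i ∩ R = T)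
    (hvw : ∀ i ∈ U, Disjoint (v i) (w i)) {i j : ι} (hi : i ∈ U) (hj : j ∈ U) :
    Disjoint (v i) (w j) := by
  obtain rfl | hij := eq_or_ne i j
  · exact hvw i hi
  rw [Finset.disjoint_left]
  intro x hxi hxj
  have hxR : x ∈ R := by
    rw [← h hi hj hij]
    exact Finset.mem_inter.2 ⟨Finset.mem_union_left _ hxi, Finset.mem_union_right _ hxj⟩
  have hxT : x ∈ v j ∩ R := by
    rw [hT j hj, ← hT i hi]
    exact Finset.mem_inter.2 ⟨hxi, hxR⟩
  exact Finset.disjoint_left.1 (hvw j hj) (Finset.mem_inter.1 hxT).1 hxj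

theorem exists_subset_isDeltaSystem_of_card_le (hκ : κ.IsRegular) (n : ℕ) {a : ι → Finset X}
    (hS : κ ≤ #S) (ha : ∀ i ∈ S, (a i).card ≤ n) :
    ∃ U ⊆ S, κ ≤ #U ∧ ∃ R, IsDeltaSystem a U R := by
  induction n generalizing a S with
  | zero =>
    refine ⟨S, subset_rfl, hS, ∅, fun i hi j _ _ ↦ ?_⟩
    have hempty : a i = ∅ := Finset.card_eq_zero.1 (Nat.le_zero.1 (ha i hi))
    exact (congrArg (· ∩ a j) hempty).trans (Finset.empty_inter (a j))
  | succ n ih =>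
    by_cases! hpoint : ∃ x, κ ≤ #{i ∈ S | x ∈ a i}
    · obtain ⟨x, hx⟩ := hpoint
      have hcard : ∀ i ∈ {i ∈ S | x ∈ a i}, ((a i).erase x).card ≤ n := fun i hi ↦ by
        rw [Finset.card_erase_of_mem hi.2]
        exact Nat.sub_le_of_le_add (ha i hi.1)
      obtain ⟨U, hUS, hU, R, hR⟩ := ih hx hcard
      exact ⟨U, fun i hi ↦ (hUS hi).1, hU, insert x R, hR.insert_of_erase fun i hi ↦ (hUS hi).2⟩
    · obtain ⟨U, hUS, hU, hdisj⟩ := exists_subset_pairwiseDisjoint_of_mk_mem_lt hκ hS hpoint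
      exact ⟨U, hUS, hU, ∅, hdisj.imp fun _ _ ↦ Finset.disjoint_iff_inter_eq_empty.1⟩

theorem exists_subset_isDeltaSystem (hκ : κ.IsRegular) (hunc : ℵ₀ < κ) (a : ι → Finset X)
    (hS : κ ≤ #S) : ∃ U ⊆ S, κ ≤ #U ∧ ∃ R, IsDeltaSystem a U R := by
  have hcover : S ⊆ ⋃ n, {i ∈ S | (a i).card = n} := fun i hi ↦ Set.mem_iUnion.2 ⟨_, hi, rfl⟩
  obtain ⟨n, hn⟩ :=
    exists_le_mk_of_subset_iUnion hunc.le (by simpa [hκ.cof_ord] using hunc) hS hcover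
  obtain ⟨U, hUS, hU⟩ := exists_subset_isDeltaSystem_of_card_le hκ n hn fun i hi ↦ hi.2.le
  exact ⟨U, fun i hi ↦ (hUS hi).1, hU⟩

theorem exists_subset_inter_eq (hκ : ℵ₀ ≤ κ) (v : ι → Finset X) (R : Finset X)
    (hS : κ ≤ #S) : ∃ U ⊆ S, κ ≤ #U ∧ ∃ T, ∀ i ∈ U, v i ∩ R = T := by
  have hcover : S ⊆ ⋃ T : R.powerset, {i ∈ S | v i ∩ R = T} := fun i hi ↦
    Set.mem_iUnion.2 ⟨⟨v i ∩ R, Finset.mem_powerset.2 Finset.inter_subset_right⟩, hi, rfl⟩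
  obtain ⟨T, hT⟩ := exists_le_mk_of_subset_iUnion_of_finite hκ hS hcover
  exact ⟨_, Set.sep_subset _ _, hT, T, fun i hi ↦ hi.2⟩

end DeltaSystem

/-- **Δ-system step in Case 2 of Claim 5.8.** Given `κ` regular uncountable and `κ` many
pairs of disjoint finite subsets `v⁰ ε, v¹ ε` of `X`, there is a `κ`-sized subfamily such
that for any two indices the union of the "positive" sides is disjoint from the union of the
"negative" sides. -/
theorem stmt8 {X : Type u} [DecidableEq X] (κ : Cardinal.{u})
    (hreg : κ.IsRegular) (hunc : Cardinal.aleph0 < κ)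
    {ι : Type u} (hι : Cardinal.mk ι = κ)
    (v0 v1 : ι → Finset X) (hdisj : ∀ ε : ι, Disjoint (v0 ε) (v1 ε)) :
    ∃ U : Set ι, Cardinal.mk U = κ ∧
      ∀ ε ∈ U, ∀ ε' ∈ U, Disjoint (v0 ε ∪ v0 ε') (v1 ε ∪ v1 ε') := by
  obtain ⟨V, -, hV, R, hR⟩ := exists_subset_isDeltaSystem hreg hunc (fun ε ↦ v0 ε ∪ v1 ε)
    (S := Set.univ) (by rw [Cardinal.mk_univ, hι])
  obtain ⟨U, hUV, hU, T, hT⟩ := exists_subset_inter_eq hunc.le v0 R hV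
  have hcross : ∀ ε ∈ U, ∀ ε' ∈ U, Disjoint (v0 ε) (v1 ε') := fun _ hε _ hε' ↦
    (hR.mono hUV).disjoint_of_inter_eq hT (fun ε _ ↦ hdisj ε) hε hε'
  refine ⟨U, le_antisymm (hι ▸ Cardinal.mk_set_le U) hU, fun ε hε ε' hε' ↦ ?_⟩
  simp only [Finset.disjoint_union_left, Finset.disjoint_union_right]
  exact ⟨⟨hcross ε hε ε hε, hcross ε' hε' ε hε⟩, hcross ε hε ε' hε', hcross ε' hε' ε' hε'⟩
end

section
/- Fix a nonempty finite linearly ordered index set I and an ordinal λ, and let S be the set of all functions β̄ : I → λ. Define a relation ≤_S on S as follows: given β̄, γ̄ ∈ S, let v = v(β̄, γ̄) be the largest set of ordinals that is simultaneously an end-segment of range(β̄) and an end-segment of range(γ̄); declare β̄ ≤_S γ̄ if and only if either (range(β̄) \ v and range(γ̄) \ v are both nonempty and max(range(β̄) \ v) < max(range(γ̄) \ v)), or (range(β̄) \ v = ∅ and range(γ̄) \ v ≠ ∅), or (range(β̄) \ v = range(γ̄) \ v = ∅ and β̄ is lexicographically ≤ γ̄ as an I-indexed tuple of ordinals). Then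 ≤_S is a linear order on S, and in fact a well-order: every nonempty subset of S has a ≤_S-least element. -/
noncomputable section

open scoped Classical

/-- `u` is an end-segment of the finite set of ordinals `r`: `u ⊆ r` and `u` is upward
closed within `r`. -/
def IsEndSegment (r u : Finset Ordinal) : Prop :=
  u ⊆ r ∧ ∀ x ∈ r, ∀ y ∈ u, y ≤ x → x ∈ u

/-- `v` is the largest common end-segment of the finite sets of ordinals `r` and `s`. -/
def IsMaxCommonEnd (r s v : Finset Ordinal) : Prop :=
  IsEndSegment r v ∧ IsEndSegment s v ∧
    ∀ u : Finset Ordinal, IsEndSegment r u → IsEndSegment s u → u ⊆ v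

/-- The range of an `I`-indexed tuple of ordinals, as a finite set of ordinals. -/
def rng {I : Type*} [Fintype I] (β : I → Ordinal) : Finset Ordinal :=
  Finset.image β Finset.univ

/-- The lexicographic order on `I`-indexed tuples of ordinals (`I` a linear order). -/
def lexLE {I : Type*} [LinearOrder I] (β γ : I → Ordinal) : Prop :=
  β = γ ∨ ∃ i : I, β i < γ i ∧ ∀ j : I, j < i → β j = γ j

/-- The order `≤_S` of the proof of Lemma 5.10: letting `v` be the largest common
end-segment of `range β` and `range γ`, compare `max (range β \ v)` with
`max (range γ \ v)`, an empty difference counting as smallest, and break remaining ties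
lexicographically. -/
def leS {I : Type*} [Fintype I] [LinearOrder I] (β γ : I → Ordinal) : Prop :=
  ∃ v : Finset Ordinal, IsMaxCommonEnd (rng β) (rng γ) v ∧
    ((∃ h1 : (rng β \ v).Nonempty, ∃ h2 : (rng γ \ v).Nonempty,
        (rng β \ v).max' h1 < (rng γ \ v).max' h2) ∨
      (rng β \ v = ∅ ∧ (rng γ \ v).Nonempty) ∨
      (rng β \ v = ∅ ∧ rng γ \ v = ∅ ∧ lexLE β γ))

/-!
Removing the common end-segment `v` from both ranges does not change how they compare
colexicographically. A common maximum of the two remainders could be adjoined to `v`, so their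
maxima differ unless both are empty. Hence `≤_S` first compares the ranges colexicographically and
then the tuples lexicographically. The colexicographic order on finite sets of ordinals is the
restriction of the Dershowitz–Manna order on multisets, hence well-founded.
-/

section Colex

variable {α : Type*}

theorem isDershowitzMannaLT_val_of_toColex_lt [PartialOrder α] {s t : Finset α}
    (h : toColex s < toColex t) : Multiset.IsDershowitzMannaLT s.val t.val := by
  obtain ⟨hne, hle⟩ := Finset.Colex.toColex_lt_toColex.1 h
  have exists_lt : ∀ y ∈ s \ t, ∃ z ∈ t \ s, y < z := by
    intro y hy
    obtain ⟨hys, hyt⟩ := Finset.mem_sdiff.1 hy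
    obtain ⟨z, hzt, hzs, hyz⟩ := hle hys hyt
    exact ⟨z, Finset.mem_sdiff.2 ⟨hzt, hzs⟩, hyz.lt_of_ne fun h => hzs (h ▸ hys)⟩
  have sdiff_nonempty : (t \ s).Nonempty := by
    obtain hst | ⟨y, hy⟩ := (s \ t).eq_empty_or_nonempty
    · rw [Finset.sdiff_nonempty]
      exact fun hts => hne ((Finset.sdiff_eq_empty_iff_subset.1 hst).antisymm hts)
    · obtain ⟨z, hz, -⟩ := exists_lt y hy
      exact ⟨z, hz⟩
  refine ⟨(s ∩ t).val, (s \ t).val, (t \ s).val, ?_, ?_, ?_, exists_lt⟩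
  · exact fun h => sdiff_nonempty.ne_empty (Finset.val_eq_zero.1 h)
  · rw [Finset.inter_val, Finset.sdiff_val, add_comm, Multiset.sub_add_inter]
  · rw [Finset.inter_comm, Finset.inter_val, Finset.sdiff_val, add_comm, Multiset.sub_add_inter]

theorem wellFoundedLT_colex_finset [PartialOrder α] [WellFoundedLT α] :
    WellFoundedLT (Colex (Finset α)) :=
  ⟨Subrelation.wf (fun {s t} h => isDershowitzMannaLT_val_of_toColex_lt (s := ofColex s)
      (t := ofColex t) h)
    (InvImage.wf (fun s : Colex (Finset α) => (ofColex s).val)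
      Multiset.wellFounded_isDershowitzMannaLT)⟩

variable [LinearOrder α]

theorem finset_max_lt_max_iff {s t : Finset α} :
    s.max < t.max ↔
      (∃ (hs : s.Nonempty) (ht : t.Nonempty), s.max' hs < t.max' ht) ∨ s = ∅ ∧ t.Nonempty := by
  obtain rfl | hs := s.eq_empty_or_nonempty
  · simp [bot_lt_iff_ne_bot, Finset.max_eq_bot, Finset.nonempty_iff_ne_empty]
  · obtain rfl | ht := t.eq_empty_or_nonempty
    · simp
    · simp [← Finset.coe_max' hs, ← Finset.coe_max' ht, hs, ht, hs.ne_empty]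

theorem toColex_lt_toColex_of_max_lt {s t : Finset α} (h : s.max < t.max) :
    toColex s < toColex t := by
  obtain ⟨m, hm⟩ := WithBot.ne_bot_iff_exists.1 h.ne_bot
  have lt_m : ∀ x ∈ s, x < m := fun x hx =>
    WithBot.coe_lt_coe.1 ((Finset.le_max hx).trans_lt (hm ▸ h))
  exact Finset.Colex.toColex_lt_toColex_iff_exists_forall_lt.2
    ⟨m, Finset.mem_of_max hm.symm, fun hms => (lt_m m hms).false, fun x hx _ => lt_m x hx⟩

end Colex

section EndSegment

variable {r s u v : Finset Ordinal}

theorem IsEndSegment.empty : IsEndSegment r ∅ :=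
  ⟨Finset.empty_subset r, by simp⟩

theorem IsEndSegment.union (hu : IsEndSegment r u) (hv : IsEndSegment r v) :
    IsEndSegment r (u ∪ v) :=
  ⟨Finset.union_subset hu.1 hv.1, fun x hx y hy hyx => Finset.mem_union.2 <|
    (Finset.mem_union.1 hy).imp (hu.2 x hx y · hyx) (hv.2 x hx y · hyx)⟩

theorem IsEndSegment.insert_max_sdiff {m : Ordinal} (hv : IsEndSegment r v)
    (hm : (r \ v).max = m) : IsEndSegment r (insert m v) := by
  refine ⟨Finset.insert_subset (Finset.mem_sdiff.1 (Finset.mem_of_max hm)).1 hv.1,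
    fun x hx y hy hyx => Finset.mem_insert.2 ?_⟩
  by_cases hxv : x ∈ v
  · exact .inr hxv
  · obtain rfl | hyv := Finset.mem_insert.1 hy
    · exact .inl ((Finset.le_max_of_eq (Finset.mem_sdiff.2 ⟨hx, hxv⟩) hm).antisymm hyx)
    · exact .inr (hv.2 x hx y hyv hyx)

theorem exists_isMaxCommonEnd (r s : Finset Ordinal) : ∃ v, IsMaxCommonEnd r s v := by
  let common := r.powerset.filter fun u => IsEndSegment r u ∧ IsEndSegment s u
  have hsup : IsEndSegment r (common.sup id) ∧ IsEndSegment s (common.sup id) :=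
    Finset.sup_induction (p := fun u => IsEndSegment r u ∧ IsEndSegment s u) ⟨.empty, .empty⟩
      (fun _ hu _ hw => ⟨hu.1.union hw.1, hu.2.union hw.2⟩)
      (fun _ hu => (Finset.mem_filter.1 hu).2)
  refine ⟨common.sup id, hsup.1, hsup.2, fun u hr hs => Finset.le_sup (f := id) ?_⟩
  exact Finset.mem_filter.2 ⟨Finset.mem_powerset.2 hr.1, hr, hs⟩

namespace IsMaxCommonEnd

theorem symm (hv : IsMaxCommonEnd r s v) : IsMaxCommonEnd s r v :=
  ⟨hv.2.1, hv.1, fun u hs hr => hv.2.2 u hr hs⟩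

theorem sdiff_eq_empty_of_max_eq (hv : IsMaxCommonEnd r s v) (h : (r \ v).max = (s \ v).max) :
    r \ v = ∅ := by
  rw [← Finset.max_eq_bot]
  by_contra hne
  obtain ⟨m, hm⟩ := WithBot.ne_bot_iff_exists.1 hne
  have hmv : m ∈ v :=
    hv.2.2 _ (hv.1.insert_max_sdiff hm.symm) (hv.2.1.insert_max_sdiff (h ▸ hm.symm))
      (Finset.mem_insert_self m v)
  exact (Finset.mem_sdiff.1 (Finset.mem_of_max hm.symm)).2 hmv

theorem eq_iff_sdiff_eq_empty (hv : IsMaxCommonEnd r s v) :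
    r = s ↔ r \ v = ∅ ∧ s \ v = ∅ := by
  constructor
  · rintro rfl
    exact ⟨hv.sdiff_eq_empty_of_max_eq rfl, hv.sdiff_eq_empty_of_max_eq rfl⟩
  · rintro ⟨hr, hs⟩
    rw [Finset.sdiff_eq_empty_iff_subset] at hr hs
    exact (hr.antisymm hv.1.1).trans (hv.2.1.1.antisymm hs)

theorem toColex_lt_of_max_sdiff_lt (hv : IsMaxCommonEnd r s v)
    (h : (r \ v).max < (s \ v).max) : toColex r < toColex s :=
  (Finset.Colex.toColex_sdiff_lt_toColex_sdiff hv.1.1 hv.2.1.1).1 (toColex_lt_toColex_of_max_lt h)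

theorem toColex_lt_iff_max_sdiff_lt (hv : IsMaxCommonEnd r s v) :
    toColex r < toColex s ↔ (r \ v).max < (s \ v).max := by
  refine ⟨fun hlt => ?_, hv.toColex_lt_of_max_sdiff_lt⟩
  obtain h | h | h := lt_trichotomy (r \ v).max (s \ v).max
  · exact h
  · have hrs : r = s := hv.eq_iff_sdiff_eq_empty.2
      ⟨hv.sdiff_eq_empty_of_max_eq h, hv.symm.sdiff_eq_empty_of_max_eq h.symm⟩
    exact absurd (congrArg toColex hrs) hlt.ne
  · exact absurd (hv.symm.toColex_lt_of_max_sdiff_lt h) hlt.asymm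

end IsMaxCommonEnd

end EndSegment

theorem lexLE_iff_toLex_le {I : Type*} [LinearOrder I] (β γ : I → Ordinal) :
    lexLE β γ ↔ toLex β ≤ toLex γ := by
  rw [le_iff_eq_or_lt, lexLE]
  exact or_congr toLex.injective.eq_iff.symm (exists_congr fun i => and_comm)

section LeS

variable {I : Type*} [Fintype I]

/-- The sort key of `≤_S`: the range of a tuple, to be compared colexicographically, paired with
the tuple itself as lexicographic tie-breaker. -/
def keyS (β : I → Ordinal) : Colex (Finset Ordinal) ×ₗ Lex (I → Ordinal) :=
  toLex (toColex (rng β), toLex β)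

theorem keyS_injective : Function.Injective (keyS (I := I)) := fun _ _ h =>
  toLex.injective (congrArg (fun k => (ofLex k).2) h)

variable [LinearOrder I]

theorem leS_iff_keyS_le (β γ : I → Ordinal) : leS β γ ↔ keyS β ≤ keyS γ := by
  have leS_clause_iff {v : Finset Ordinal} (hv : IsMaxCommonEnd (rng β) (rng γ) v) :
      ((∃ h1 : (rng β \ v).Nonempty, ∃ h2 : (rng γ \ v).Nonempty,
          (rng β \ v).max' h1 < (rng γ \ v).max' h2) ∨
        (rng β \ v = ∅ ∧ (rng γ \ v).Nonempty) ∨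
        (rng β \ v = ∅ ∧ rng γ \ v = ∅ ∧ lexLE β γ)) ↔ keyS β ≤ keyS γ := by
    rw [← or_assoc, ← finset_max_lt_max_iff, ← hv.toColex_lt_iff_max_sdiff_lt, ← and_assoc,
      ← hv.eq_iff_sdiff_eq_empty, lexLE_iff_toLex_le, keyS, keyS, Prod.Lex.toLex_le_toLex,
      toColex_inj]
  obtain ⟨v, hv⟩ := exists_isMaxCommonEnd (rng β) (rng γ)
  exact ⟨fun ⟨_, hw, h⟩ => (leS_clause_iff hw).1 h, fun h => ⟨v, hv, (leS_clause_iff hv).2 h⟩⟩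

theorem exists_leS_least {T : Set (I → Ordinal)} (hT : T.Nonempty) :
    ∃ β ∈ T, ∀ γ ∈ T, leS β γ := by
  have : WellFoundedLT (Colex (Finset Ordinal)) := wellFoundedLT_colex_finset
  obtain ⟨β, hβ, hmin⟩ := (InvImage.wf (keyS (I := I)) wellFounded_lt).has_min T hT
  exact ⟨β, hβ, fun γ hγ => (leS_iff_keyS_le β γ).2 (not_lt.1 (hmin γ hγ))⟩

end LeS

theorem stmt11_general {I : Type*} [Fintype I] [LinearOrder I] :
    (∀ β : I → Ordinal, leS β β) ∧
    (∀ β γ : I → Ordinal, leS β γ → leS γ β → β = γ) ∧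
    (∀ β γ δ : I → Ordinal, leS β γ → leS γ δ → leS β δ) ∧
    (∀ β γ : I → Ordinal, leS β γ ∨ leS γ β) ∧
    (∀ T : Set (I → Ordinal), T.Nonempty → ∃ β ∈ T, ∀ γ ∈ T, leS β γ) := by
  refine ⟨?_, ?_, ?_, ?_, fun _ => exists_leS_least⟩ <;> simp only [leS_iff_keyS_le]
  · exact fun _ => le_rfl
  · exact fun _ _ hβγ hγβ => keyS_injective (le_antisymm hβγ hγβ)
  · exact fun _ _ _ => le_trans
  · exact fun _ _ => le_total _ _

/-- **Lemma 5.10 (the auxiliary well-order).** For a nonempty finite linear order `I` and an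
ordinal `lam`, the relation `≤_S` is a linear order on the set
`S = {β : I → Ordinal // ∀ i, β i < lam}`, and indeed a well-order: every nonempty subset
of `S` has a `≤_S`-least element. -/
theorem stmt11 {I : Type*} [Fintype I] [LinearOrder I] [Nonempty I] (lam : Ordinal) :
    (∀ β : {f : I → Ordinal // ∀ i, f i < lam}, leS β.1 β.1) ∧
    (∀ β γ : {f : I → Ordinal // ∀ i, f i < lam},
      leS β.1 γ.1 → leS γ.1 β.1 → β = γ) ∧
    (∀ β γ δ : {f : I → Ordinal // ∀ i, f i < lam},
      leS β.1 γ.1 → leS γ.1 δ.1 → leS β.1 δ.1) ∧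
    (∀ β γ : {f : I → Ordinal // ∀ i, f i < lam}, leS β.1 γ.1 ∨ leS γ.1 β.1) ∧
    (∀ T : Set {f : I → Ordinal // ∀ i, f i < lam}, T.Nonempty →
      ∃ β ∈ T, ∀ γ ∈ T, leS β.1 γ.1) :=
  let ⟨hrefl, hantisymm, htrans, htotal, hleast⟩ := stmt11_general (I := I)
  ⟨fun _ => hrefl _, fun _ _ h h' => Subtype.ext (hantisymm _ _ h h'), fun _ _ _ => htrans _ _ _,
    fun _ _ => htotal _ _, fun _ hT => by simpa using hleast _ (hT.image Subtype.val)⟩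
end
end
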